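/- Let d ≥ 1 be an integer and s > d/2. Then there exists a constant C = C(d, s) > 0 such that for every a : ℤ^d → ℂ with ‖a‖_{ℓ²_s} < ∞, the correlation function a_*(p) := Σ_{m ∈ ℤ^d} |a(m)| |a(m + p)| is well defined (the series converges) and satisfies Σ_{p ∈ ℤ^d} (1 + |p|)^{2s} |a_*(p)|² ≤ C ‖a‖⁴_{ℓ²_s}; that is, ‖a_*‖_{ℓ²_s} ≤ C ‖a‖²_{ℓ²_s}. -/

import Mathlib

/-- Euclidean norm of a lattice point `n ∈ ℤ^d`, viewed as a vector in `ℝ^d`. -/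
noncomputable def latNorm {d : ℕ} (n : Fin d → ℤ) : ℝ :=
  Real.sqrt (∑ i, ((n i : ℝ)) ^ 2)

lemma latNorm_eq {d : ℕ} (n : Fin d → ℤ) :
    latNorm n = ‖WithLp.toLp 2 (fun i => (n i : ℝ))‖ := by
  simp [latNorm, EuclideanSpace.norm_eq]

lemma latNorm_nonneg {d : ℕ} (n : Fin d → ℤ) : 0 ≤ latNorm n := Real.sqrt_nonneg _

lemma latNorm_tri {d : ℕ} (m p : Fin d → ℤ) : latNorm p ≤ latNorm m + latNorm (m + p) := by
  simp only [latNorm_eq]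
  have h : WithLp.toLp 2 (fun i => (p i : ℝ)) =
      WithLp.toLp 2 (fun i => (((m + p) i : ℤ) : ℝ)) - WithLp.toLp 2 (fun i => (m i : ℝ)) := by
    ext i
    simp
  rw [h, add_comm ‖_‖]
  exact norm_sub_le (E := EuclideanSpace ℝ (Fin d)) _ _

lemma sup_le_latNorm {d : ℕ} (n : Fin d → ℤ) : ‖(fun i => (n i : ℝ))‖ ≤ latNorm n := by
  rw [pi_norm_le_iff_of_nonneg (latNorm_nonneg n)]
  intro i
  rw [latNorm_eq]
  exact PiLp.norm_apply_le (WithLp.toLp 2 (fun i => (n i : ℝ))) i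

lemma weight_summable (d : ℕ) (s : ℝ) (hs : (d : ℝ) / 2 < s) :
    Summable fun n : Fin d → ℤ => ((1 + latNorm n) ^ (2 * s))⁻¹ := by
  let L : Submodule ℤ (Fin d → ℝ) := Submodule.span ℤ (Set.range (Pi.basisFun ℝ (Fin d)))
  have hr : Module.finrank ℤ L = d := by
    rw [ZLattice.rank ℝ L]; simp
  have hL := ZLattice.summable_norm_rpow L (-(2 * s)) (by rw [hr]; linarith)
  let e : (Fin d → ℤ) → L := fun n => ⟨fun i => (n i : ℝ), by
    have : (fun i => (n i : ℝ)) = ∑ i, n i • (Pi.basisFun ℝ (Fin d) i) := by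
      ext j
      simp [Finset.sum_apply, Pi.single_apply]
    rw [this]
    exact Submodule.sum_mem _ fun i _ =>
      Submodule.smul_mem _ _ (Submodule.subset_span ⟨i, rfl⟩)⟩
  have he : Function.Injective e := by
    intro m n h
    ext i
    have := congrFun (congrArg Subtype.val h) i
    simpa [e] using this
  have h2 := hL.comp_injective he
  refine Summable.of_norm_bounded_eventually h2 ?_
  have : ∀ᶠ n : Fin d → ℤ in Filter.cofinite, n ≠ 0 := by
    simp [Filter.eventually_cofinite]
  filter_upwards [this] with n hn
  have h0 : 0 < ‖e n‖ := by
    rw [norm_pos_iff]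
    intro h
    apply hn
    apply he
    rw [h]
    ext i
    simp [e]
  have h1 : ‖e n‖ ≤ 1 + latNorm n := by
    have := sup_le_latNorm n
    change ‖(fun i => (n i : ℝ))‖ ≤ _
    linarith
  have hd0 : (0 : ℝ) ≤ d := Nat.cast_nonneg d
  have hl := latNorm_nonneg n
  rw [Real.norm_of_nonneg (by positivity), ← Real.rpow_neg (by positivity)]
  exact Real.rpow_le_rpow_of_nonpos h0 h1 (by linarith)

lemma weight_tri {d : ℕ} (s : ℝ) (hs : 0 ≤ s) (m p : Fin d → ℤ) :
    (1 + latNorm p) ^ (2 * s) ≤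
      2 ^ (2 * s) * ((1 + latNorm m) ^ (2 * s) + (1 + latNorm (m + p)) ^ (2 * s)) := by
  have h0 := latNorm_nonneg p
  have h1 := latNorm_nonneg m
  have h2 := latNorm_nonneg (m + p)
  have h3 := latNorm_tri m p
  have h4 : 0 ≤ (1 + latNorm m) ^ (2 * s) := by positivity
  have h5 : 0 ≤ (1 + latNorm (m + p)) ^ (2 * s) := by positivity
  have hK : (0 : ℝ) ≤ 2 ^ (2 * s) := by positivity
  rcases le_total (latNorm m) (latNorm (m + p)) with h | h
  · calc (1 + latNorm p) ^ (2 * s) ≤ (2 * (1 + latNorm (m + p))) ^ (2 * s) :=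
          Real.rpow_le_rpow (by positivity) (by linarith) (by linarith)
      _ = 2 ^ (2 * s) * (1 + latNorm (m + p)) ^ (2 * s) :=
          Real.mul_rpow (by norm_num) (by positivity)
      _ ≤ _ := mul_le_mul_of_nonneg_left (by linarith) hK
  · calc (1 + latNorm p) ^ (2 * s) ≤ (2 * (1 + latNorm m)) ^ (2 * s) :=
          Real.rpow_le_rpow (by positivity) (by linarith) (by linarith)
      _ = 2 ^ (2 * s) * (1 + latNorm m) ^ (2 * s) :=
          Real.mul_rpow (by norm_num) (by positivity)
      _ ≤ _ := mul_le_mul_of_nonneg_left (by linarith) hK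

lemma cs_tsum {ι : Type*} (h F G : ι → ℝ) (hh : ∀ i, 0 ≤ h i) (hF0 : ∀ i, 0 ≤ F i)
    (hG0 : ∀ i, 0 ≤ G i) (hFG : ∀ i, h i ^ 2 = F i * G i) (hF : Summable F) (hG : Summable G) :
    Summable h ∧ (∑' i, h i) ^ 2 ≤ (∑' i, F i) * (∑' i, G i) := by
  have e : ∀ x : ℝ, 0 ≤ x → (√x) ^ (2 : ℝ) = x := fun x hx => by
    rw [Real.rpow_two, Real.sq_sqrt hx]
  have := Real.summable_and_inner_le_Lp_mul_Lq_tsum_of_nonneg (p := 2) (q := 2)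
    (f := fun i => √(F i)) (g := fun i => √(G i)) Real.HolderConjugate.two_two
    (fun i => Real.sqrt_nonneg _) (fun i => Real.sqrt_nonneg _)
    (by simpa only [e _ (hF0 _)] using hF) (by simpa only [e _ (hG0 _)] using hG)
  have hfg : ∀ i, √(F i) * √(G i) = h i := fun i => by
    rw [← Real.sqrt_mul (hF0 i), ← hFG, Real.sqrt_sq (hh i)]
  simp only [e _ (hF0 _), e _ (hG0 _), hfg, ← Real.sqrt_eq_rpow] at this
  refine ⟨this.1, ?_⟩
  have h0 : 0 ≤ ∑' i, h i := tsum_nonneg hh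
  calc (∑' i, h i) ^ 2 ≤ (√(∑' i, F i) * √(∑' i, G i)) ^ 2 := by gcongr; exact this.2
    _ = _ := by rw [mul_pow, Real.sq_sqrt (tsum_nonneg hF0), Real.sq_sqrt (tsum_nonneg hG0)]

/-- For `d ≥ 1` and `s > d/2` there is `C = C(d, s) > 0` such that for
every `a : ℤ^d → ℂ` with finite `ℓ²_s`-norm, the correlation
`a_*(p) = ∑_m |a(m)| |a(m + p)|` converges and satisfies
`∑_p (1 + |p|)^{2s} a_*(p)² ≤ C ‖a‖⁴_{ℓ²_s}`, i.e. `‖a_*‖_{ℓ²_s} ≤ √C ‖a‖²_{ℓ²_s}`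
(here the constant `C` bounds the squared norm). -/
theorem stmt14 (d : ℕ) (hd : 1 ≤ d) (s : ℝ) (hs : (d : ℝ) / 2 < s) :
    ∃ C : ℝ, 0 < C ∧ ∀ a : (Fin d → ℤ) → ℂ,
      (Summable fun n : Fin d → ℤ => (1 + latNorm n) ^ (2 * s) * ‖a n‖ ^ 2) →
      (∀ p : Fin d → ℤ, Summable fun m : Fin d → ℤ => ‖a m‖ * ‖a (m + p)‖) ∧
      (Summable fun p : Fin d → ℤ =>
        (1 + latNorm p) ^ (2 * s) * (∑' m : Fin d → ℤ, ‖a m‖ * ‖a (m + p)‖) ^ 2) ∧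
      (∑' p : Fin d → ℤ,
          (1 + latNorm p) ^ (2 * s) * (∑' m : Fin d → ℤ, ‖a m‖ * ‖a (m + p)‖) ^ 2)
        ≤ C * (∑' n : Fin d → ℤ, (1 + latNorm n) ^ (2 * s) * ‖a n‖ ^ 2) ^ 2 := by
  have hd0 : (0 : ℝ) ≤ d := Nat.cast_nonneg d
  have hs0 : 0 ≤ s := by linarith
  have hS := weight_summable d s hs
  set W : (Fin d → ℤ) → ℝ := fun n => (1 + latNorm n) ^ (2 * s) with hW
  have hWpos : ∀ n, 0 < W n := fun n => by
    have := latNorm_nonneg n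
    simp only [hW]; positivity
  have hW1 : ∀ n, (W n)⁻¹ ≤ 1 := fun n => by
    apply inv_le_one_of_one_le₀
    have := latNorm_nonneg n
    exact Real.one_le_rpow (by linarith) (by linarith)
  have hWt : ∀ m p, W p ≤ 2 ^ (2 * s) * (W m + W (m + p)) := fun m p => weight_tri s hs0 m p
  have hWp : ∀ n, (1 + latNorm n) ^ (2 * s) = W n := fun n => rfl
  simp only [hWp] at hS ⊢
  clear_value W
  set S := ∑' n, (W n)⁻¹ with hSdef
  have hSpos : 0 < S := hS.tsum_pos (fun n => (inv_pos.2 (hWpos n)).le) 0 (inv_pos.2 (hWpos 0))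
  set K : ℝ := 2 ^ (2 * s) with hK
  have hKpos : 0 < K := by positivity
  refine ⟨2 * K * S, by positivity, fun a ha => ?_⟩
  set A : (Fin d → ℤ) → ℝ := fun n => W n * ‖a n‖ ^ 2 with hA
  have hA0 : ∀ n, 0 ≤ A n := fun n => by
    have := hWpos n
    simp only [hA]; positivity
  -- the double series
  have hprod : Summable fun x : (Fin d → ℤ) × (Fin d → ℤ) => A x.1 * A x.2 :=
    ha.mul_of_nonneg ha hA0 hA0
  let e : (Fin d → ℤ) × (Fin d → ℤ) ≃ (Fin d → ℤ) × (Fin d → ℤ) :=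
    { toFun := fun x => (x.2, x.2 + x.1)
      invFun := fun y => (y.2 - y.1, y.1)
      left_inv := fun x => by simp
      right_inv := fun y => by simp }
  have hprod2 : Summable fun x : (Fin d → ℤ) × (Fin d → ℤ) => A x.2 * A (x.2 + x.1) :=
    e.summable_iff.2 hprod
  have hval : ∑' p, ∑' m, A m * A (m + p) = (∑' n, A n) ^ 2 := by
    rw [sq, ha.tsum_mul_tsum ha hprod, ← e.tsum_eq]
    exact hprod2.tsum_prod.symm
  have hin : ∀ p, Summable fun m => A m * A (m + p) := fun p => hprod2.prod_factor p
  have hout : Summable fun p => ∑' m, A m * A (m + p) := hprod2.prod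
  have hshift : ∀ p, Summable fun m => (W (m + p))⁻¹ := fun p =>
    (Equiv.addRight p).summable_iff.2 hS
  have hshiftval : ∀ p, ∑' m, (W (m + p))⁻¹ = S := fun p =>
    (Equiv.addRight p).tsum_eq (fun m => (W m)⁻¹)
  have hGsum : ∀ p, Summable fun m => (W m)⁻¹ * (W (m + p))⁻¹ := fun p => by
    refine Summable.of_nonneg_of_le (fun m => ?_) (fun m => ?_) hS
    · have := hWpos m
      have := hWpos (m + p)
      positivity
    · exact mul_le_of_le_one_right (inv_pos.2 (hWpos m)).le (hW1 _)
  have hGb : ∀ p, W p * ∑' m, (W m)⁻¹ * (W (m + p))⁻¹ ≤ 2 * K * S := fun p => by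
    rw [← tsum_mul_left]
    calc ∑' m, W p * ((W m)⁻¹ * (W (m + p))⁻¹)
        ≤ ∑' m, K * ((W (m + p))⁻¹ + (W m)⁻¹) := by
          refine Summable.tsum_le_tsum (fun m => ?_) ((hGsum p).mul_left _)
            (((hshift p).add hS).mul_left _)
          have h1 := hWpos m
          have h2 := hWpos (m + p)
          calc W p * ((W m)⁻¹ * (W (m + p))⁻¹)
              ≤ (K * (W m + W (m + p))) * ((W m)⁻¹ * (W (m + p))⁻¹) :=
                mul_le_mul_of_nonneg_right (hWt m p) (by positivity)
            _ = _ := by field_simp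
      _ = 2 * K * S := by
          rw [tsum_mul_left, (hshift p).tsum_add hS, hshiftval]
          ring
  have hcs : ∀ p, (Summable fun m => ‖a m‖ * ‖a (m + p)‖) ∧
      (∑' m, ‖a m‖ * ‖a (m + p)‖) ^ 2 ≤
        (∑' m, A m * A (m + p)) * ∑' m, (W m)⁻¹ * (W (m + p))⁻¹ := fun p => by
    refine cs_tsum _ _ _ (fun m => by positivity) (fun m => mul_nonneg (hA0 _) (hA0 _))
      (fun m => ?_) (fun m => ?_) (hin p) (hGsum p)
    · have := hWpos m
      have := hWpos (m + p)
      positivity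
    · have := hWpos m
      have := hWpos (m + p)
      simp only [hA]
      field_simp
  have hb : ∀ p, W p * (∑' m, ‖a m‖ * ‖a (m + p)‖) ^ 2 ≤
      2 * K * S * ∑' m, A m * A (m + p) := fun p => by
    have hI : 0 ≤ ∑' m, A m * A (m + p) := tsum_nonneg fun m => mul_nonneg (hA0 _) (hA0 _)
    calc W p * (∑' m, ‖a m‖ * ‖a (m + p)‖) ^ 2
        ≤ W p * ((∑' m, A m * A (m + p)) * ∑' m, (W m)⁻¹ * (W (m + p))⁻¹) :=
          mul_le_mul_of_nonneg_left (hcs p).2 (hWpos p).le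
      _ = (W p * ∑' m, (W m)⁻¹ * (W (m + p))⁻¹) * ∑' m, A m * A (m + p) := by ring
      _ ≤ _ := mul_le_mul_of_nonneg_right (hGb p) hI
  have hsum : Summable fun p => W p * (∑' m, ‖a m‖ * ‖a (m + p)‖) ^ 2 :=
    Summable.of_nonneg_of_le (fun p => mul_nonneg (hWpos p).le (sq_nonneg _)) hb
      (hout.mul_left _)
  refine ⟨fun p => (hcs p).1, hsum, ?_⟩
  rw [← hval, ← tsum_mul_left]
  exact hsum.tsum_le_tsum hb (hout.mul_left _)
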